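/- Let V be a finite-dimensional real vector space of dimension at least 4, and let ω₁ and ω₂ be linear symplectic forms on V such that every complex structure compatible with ω₁ is tamed by ω₂. Then for every pair of linearly independent vectors v, w ∈ V one has ω₁(v, w) > 0 if and only if ω₂(v, w) > 0. -/

import Mathlib

/-- A linear symplectic form: an alternating, nondegenerate bilinear form. -/
def IsSymplecticForm {V : Type*} [AddCommGroup V] [Module ℝ V]
    (ω : V →ₗ[ℝ] V →ₗ[ℝ] ℝ) : Prop :=
  (∀ v, ω v v = 0) ∧ ∀ v, v ≠ 0 → ∃ w, ω v w ≠ 0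

/-- A complex structure: a linear endomorphism with `J ∘ J = -id`. -/
def IsComplexStructure {V : Type*} [AddCommGroup V] [Module ℝ V]
    (J : V →ₗ[ℝ] V) : Prop :=
  ∀ v, J (J v) = -v

/-- `J` is tamed by `ω` if `ω(v, J v) > 0` for all `v ≠ 0`. -/
def Tames {V : Type*} [AddCommGroup V] [Module ℝ V]
    (ω : V →ₗ[ℝ] V →ₗ[ℝ] ℝ) (J : V →ₗ[ℝ] V) : Prop :=
  ∀ v, v ≠ 0 → 0 < ω v (J v)

/-- `J` is compatible with `ω`: tamed by `ω` and `ω(Ju, Jv) = ω(u, v)`. -/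
def CompatibleWith {V : Type*} [AddCommGroup V] [Module ℝ V]
    (ω : V →ₗ[ℝ] V →ₗ[ℝ] ℝ) (J : V →ₗ[ℝ] V) : Prop :=
  (∀ v, v ≠ 0 → 0 < ω v (J v)) ∧ ∀ u v, ω (J u) (J v) = ω u v

section CompatibleComplexStructures

variable {V : Type*} [AddCommGroup V] [Module ℝ V] {ω : V →ₗ[ℝ] V →ₗ[ℝ] ℝ}

theorem IsSymplecticForm.neg_swap (hω : IsSymplecticForm ω) (x y : V) : ω x y = -ω y x := by
  have hxy := hω.1 (x + y)
  simp only [map_add, LinearMap.add_apply, hω.1] at hxy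
  linarith

theorem IsSymplecticForm.exists_pos (hω : IsSymplecticForm ω) {v : V} (hv : v ≠ 0) :
    ∃ w, 0 < ω v w := by
  obtain ⟨w, hw⟩ := hω.2 v hv
  rcases lt_or_gt_of_ne hw with hw | hw
  · exact ⟨-w, by simpa using hw⟩
  · exact ⟨w, hw⟩

/-- The `ω`-orthogonal complement of the span of `v` and `w`. -/
def pairComplement (ω : V →ₗ[ℝ] V →ₗ[ℝ] ℝ) (v w : V) : Submodule ℝ V :=
  LinearMap.ker (ω v) ⊓ LinearMap.ker (ω w)

theorem mem_pairComplement {v w x : V} :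
    x ∈ pairComplement ω v w ↔ ω v x = 0 ∧ ω w x = 0 := by
  simp [pairComplement]

/-- The projection onto the `ω`-orthogonal complement of a hyperbolic pair. -/
noncomputable def pairProjection (hω : IsSymplecticForm ω) {v w : V} (hvw : 0 < ω v w) :
    V →ₗ[ℝ] pairComplement ω v w :=
  LinearMap.codRestrict _
    (LinearMap.id - (ω v w)⁻¹ • (ω.flip w).smulRight v - (ω v w)⁻¹ • (ω v).smulRight w) <| by
    intro x
    have hc := hvw.ne'
    rw [mem_pairComplement]
    simp only [LinearMap.sub_apply, LinearMap.id_apply, LinearMap.smul_apply,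
      LinearMap.smulRight_apply, LinearMap.flip_apply, map_sub, map_smul, smul_eq_mul, hω.1,
      hω.neg_swap w v, hω.neg_swap w x]
    constructor <;> field_simp <;> ring

theorem pairProjection_decomposition (hω : IsSymplecticForm ω) {v w : V} (hvw : 0 < ω v w)
    (x : V) :
    x = ((ω v w)⁻¹ * ω x w) • v + ((ω v w)⁻¹ * ω v x) • w + (pairProjection hω hvw x : V) := by
  simp only [pairProjection, LinearMap.codRestrict_apply, LinearMap.sub_apply,
    LinearMap.id_apply, LinearMap.smul_apply, LinearMap.smulRight_apply, LinearMap.flip_apply,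
    mul_smul]
  abel

theorem IsSymplecticForm.restrict_pairComplement (hω : IsSymplecticForm ω) {v w : V}
    (hvw : 0 < ω v w) :
    IsSymplecticForm (ω.domRestrict₁₂ (pairComplement ω v w) (pairComplement ω v w)) := by
  refine ⟨fun x => hω.1 x, fun x hx => ?_⟩
  obtain ⟨y, hy⟩ := hω.2 x (by simpa using hx)
  refine ⟨pairProjection hω hvw y, ?_⟩
  obtain ⟨hxv, hxw⟩ := mem_pairComplement.1 x.2
  rw [pairProjection_decomposition hω hvw y] at hy
  simpa [hω.neg_swap x v, hω.neg_swap x w, hxv, hxw, LinearMap.domRestrict₁₂_apply] using hy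

/-- A compatible complex structure on the complement of a hyperbolic pair `v, w` extends to one on
the whole space taking `v` to `w`. -/
theorem exists_compatible_extension (hω : IsSymplecticForm ω) {v w : V} (hvw : 0 < ω v w)
    {K : pairComplement ω v w →ₗ[ℝ] pairComplement ω v w} (hK : IsComplexStructure K)
    (hKω : CompatibleWith
      (ω.domRestrict₁₂ (pairComplement ω v w) (pairComplement ω v w)) K) :
    ∃ J : V →ₗ[ℝ] V, IsComplexStructure J ∧ CompatibleWith ω J ∧ J v = w := by
  have hc := hvw.ne'
  have hdec : ∀ x : V, ∃ (a b : ℝ) (p : pairComplement ω v w), x = a • v + b • w + (p : V) :=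
    fun x => ⟨_, _, _, pairProjection_decomposition hω hvw x⟩
  have hv (p : pairComplement ω v w) : ω v p = 0 := (mem_pairComplement.1 p.2).1
  have hw (p : pairComplement ω v w) : ω w p = 0 := (mem_pairComplement.1 p.2).2
  have hv' (p : pairComplement ω v w) : ω p v = 0 := by rw [hω.neg_swap, hv, neg_zero]
  have hw' (p : pairComplement ω v w) : ω p w = 0 := by rw [hω.neg_swap, hw, neg_zero]
  have hwv := hω.neg_swap w v
  obtain ⟨J, hJ⟩ : ∃ J : V →ₗ[ℝ] V, ∀ (a b : ℝ) (p : pairComplement ω v w),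
      J (a • v + b • w + (p : V)) = (-b) • v + a • w + (K p : V) := by
    refine ⟨(ω v w)⁻¹ • (ω.flip w).smulRight w - (ω v w)⁻¹ • (ω v).smulRight v +
      (pairComplement ω v w).subtype ∘ₗ K ∘ₗ pairProjection hω hvw, fun a b p => ?_⟩
    have ha : (ω v w)⁻¹ * ω (a • v + b • w + (p : V)) w = a := by
      simp [hω.1, hw', hc, mul_comm a]
    have hb : (ω v w)⁻¹ * ω v (a • v + b • w + (p : V)) = b := by
      simp [hω.1, hv, hc, mul_comm b]
    have hproj : pairProjection hω hvw (a • v + b • w + (p : V)) = p := by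
      have hx := pairProjection_decomposition hω hvw (a • v + b • w + (p : V))
      rw [ha, hb] at hx
      exact Subtype.ext (add_left_cancel hx).symm
    simp only [LinearMap.add_apply (_ - _), LinearMap.sub_apply, LinearMap.smul_apply (ω v w)⁻¹,
      LinearMap.smulRight_apply, LinearMap.comp_apply, Submodule.subtype_apply, hproj,
      LinearMap.flip_apply, smul_smul, ha, hb]
    module
  refine ⟨J, fun x => ?_, ⟨fun x hx => ?_, fun x y => ?_⟩, ?_⟩
  · obtain ⟨a, b, p, rfl⟩ := hdec x
    rw [hJ, hJ, hK]
    push_cast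
    module
  · obtain ⟨a, b, p, rfl⟩ := hdec x
    have key : ω (a • v + b • w + (p : V)) (J (a • v + b • w + (p : V))) =
        (a ^ 2 + b ^ 2) * ω v w + ω p (K p) := by
      rw [hJ]
      simp only [map_add, map_smul, LinearMap.add_apply, LinearMap.smul_apply, smul_eq_mul, hω.1,
        hv, hw, hv', hw', hwv]
      ring
    rw [key]
    by_cases hp : p = 0
    · subst hp
      have hab : 0 < a ^ 2 + b ^ 2 := by
        by_contra! hab
        have ha : a = 0 := by nlinarith [sq_nonneg a, sq_nonneg b]
        have hb : b = 0 := by nlinarith [sq_nonneg a, sq_nonneg b]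
        exact hx (by simp [ha, hb])
      simpa using mul_pos hab hvw
    · have hpos : 0 < ω p (K p) := hKω.1 p hp
      positivity
  · obtain ⟨a, b, p, rfl⟩ := hdec x
    obtain ⟨a', b', q, rfl⟩ := hdec y
    have hpq : ω (K p) (K q) = ω p q := hKω.2 p q
    rw [hJ, hJ]
    simp only [map_add, map_smul, LinearMap.add_apply, LinearMap.smul_apply, smul_eq_mul, hω.1,
      hv, hw, hv', hw', hwv, hpq]
    ring
  · simpa using hJ 1 0 0

theorem finrank_pairComplement_lt [FiniteDimensional ℝ V] {v w : V}
    (hvw : 0 < ω v w) : Module.finrank ℝ (pairComplement ω v w) < Module.finrank ℝ V := by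
  refine Submodule.finrank_lt fun htop => ?_
  have hw : w ∈ pairComplement ω v w := htop ▸ Submodule.mem_top
  exact hvw.ne' (mem_pairComplement.1 hw).1

end CompatibleComplexStructures

theorem exists_compatible {V : Type*} [AddCommGroup V] [Module ℝ V] [FiniteDimensional ℝ V]
    {ω : V →ₗ[ℝ] V →ₗ[ℝ] ℝ} (hω : IsSymplecticForm ω) :
    ∃ J : V →ₗ[ℝ] V, IsComplexStructure J ∧ CompatibleWith ω J := by
  by_cases htriv : ∀ v : V, v = 0
  · exact ⟨0, fun v => by simp [htriv v], fun v hv => (hv (htriv v)).elim,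
      fun u v => by simp [htriv v]⟩
  · push Not at htriv
    obtain ⟨v, hv⟩ := htriv
    obtain ⟨w, hvw⟩ := hω.exists_pos hv
    obtain ⟨K, hK, hKω⟩ := exists_compatible (hω.restrict_pairComplement hvw)
    obtain ⟨J, hJ, hJω, -⟩ := exists_compatible_extension hω hvw hK hKω
    exact ⟨J, hJ, hJω⟩
termination_by Module.finrank ℝ V
decreasing_by exact finrank_pairComplement_lt hvw

theorem exists_compatible_apply_eq {V : Type*} [AddCommGroup V] [Module ℝ V]
    [FiniteDimensional ℝ V] {ω : V →ₗ[ℝ] V →ₗ[ℝ] ℝ} (hω : IsSymplecticForm ω) {v w : V}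
    (hvw : 0 < ω v w) :
    ∃ J : V →ₗ[ℝ] V, IsComplexStructure J ∧ CompatibleWith ω J ∧ J v = w := by
  obtain ⟨K, hK, hKω⟩ := exists_compatible (hω.restrict_pairComplement hvw)
  exact exists_compatible_extension hω hvw hK hKω

theorem positivity_is_common_for_taming_forms
    {V : Type*} [AddCommGroup V] [Module ℝ V] [FiniteDimensional ℝ V]
    (hdim : 4 ≤ Module.finrank ℝ V)
    (ω₁ ω₂ : V →ₗ[ℝ] V →ₗ[ℝ] ℝ)
    (h₁ : IsSymplecticForm ω₁) (h₂ : IsSymplecticForm ω₂)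
    (h : ∀ J : V →ₗ[ℝ] V, IsComplexStructure J → CompatibleWith ω₁ J → Tames ω₂ J)
    (v w : V) (hvw : LinearIndependent ℝ ![v, w]) :
    0 < ω₁ v w ↔ 0 < ω₂ v w := by
  have hv : v ≠ 0 := hvw.ne_zero 0
  have hpos {x : V} (hx : 0 < ω₁ v x) : 0 < ω₂ v x := by
    obtain ⟨J, hJ, hJω, rfl⟩ := exists_compatible_apply_eq h₁ hx
    exact h J hJ hJω v hv
  refine ⟨hpos, fun hw => ?_⟩
  by_contra! hle
  obtain ⟨u, hu⟩ := h₁.exists_pos hv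
  -- Moving `u` against `w` keeps `ω₁ v` positive and makes `ω₂ v` vanish.
  have hu₂ := hpos hu
  have hx : 0 < ω₁ v (u - (ω₂ v u / ω₂ v w) • w) := by
    have := mul_nonpos_of_nonneg_of_nonpos (div_pos hu₂ hw).le hle
    simp only [map_sub, map_smul, smul_eq_mul]
    linarith
  have hx₂ := hpos hx
  simp [div_mul_cancel₀ _ hw.ne'] at hx₂
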